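/- arXiv:2301.03517 — 2 statements merged into one kernel-verified Lean document; each statement's English description precedes it below -/
import Mathlib

section
/- For every n ≥ 2 and α ∈ (0,1), the set of values {DQ^ES_α(X) : X a random vector of n integrable real random variables on the given atomless probability space} is exactly the closed interval [0, 1]. -/
open MeasureTheory ProbabilityTheory Filter Set

namespace DQ

variable {Ω : Type*} [MeasurableSpace Ω]

/-- An atomless probability measure: every non-null measurable set has a measurable
subset of strictly smaller positive measure. -/
def Atomless (P : Measure Ω) : Prop :=
  ∀ A : Set Ω, MeasurableSet A → 0 < P A →
    ∃ B, MeasurableSet B ∧ B ⊆ A ∧ 0 < P B ∧ P B < P A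

/-- Value-at-Risk at level `α` (small-`α` convention):
`VaR_α(X) = inf {x | P(X ≤ x) ≥ 1 - α}`. -/
noncomputable def VaR (P : Measure Ω) (α : ℝ) (X : Ω → ℝ) : ℝ :=
  sInf {x : ℝ | 1 - α ≤ (P {ω | X ω ≤ x}).toReal}

/-- Expected Shortfall at level `α`: `ES_α(X) = (1/α) ∫_0^α VaR_β(X) dβ`. -/
noncomputable def ES (P : Measure Ω) (α : ℝ) (X : Ω → ℝ) : ℝ :=
  (1 / α) * ∫ β in Set.Ioo (0 : ℝ) α, VaR P β X

/-- `α* = inf {β ∈ (0,1) | VaR_β(∑ Xᵢ) ≤ ∑ VaR_α(Xᵢ)}`, with `inf ∅ = 1`. -/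
noncomputable def alphaStarVaR (P : Measure Ω) (α : ℝ) {n : ℕ} (X : Fin n → Ω → ℝ) : ℝ :=
  sInf ({β ∈ Set.Ioo (0 : ℝ) 1 |
    VaR P β (fun ω => ∑ i, X i ω) ≤ ∑ i, VaR P α (X i)} ∪ {1})

/-- Diversification quotient based on VaR: `DQ^VaR_α(X) = α*/α`. -/
noncomputable def DQVaR (P : Measure Ω) (α : ℝ) {n : ℕ} (X : Fin n → Ω → ℝ) : ℝ :=
  alphaStarVaR P α X / α

/-- `α* = inf {β ∈ (0,1) | ES_β(∑ Xᵢ) ≤ ∑ ES_α(Xᵢ)}`, with `inf ∅ = 1`. -/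
noncomputable def alphaStarES (P : Measure Ω) (α : ℝ) {n : ℕ} (X : Fin n → Ω → ℝ) : ℝ :=
  sInf ({β ∈ Set.Ioo (0 : ℝ) 1 |
    ES P β (fun ω => ∑ i, X i ω) ≤ ∑ i, ES P α (X i)} ∪ {1})

/-- Diversification quotient based on ES: `DQ^ES_α(X) = α*/α`. -/
noncomputable def DQES (P : Measure Ω) (α : ℝ) {n : ℕ} (X : Fin n → Ω → ℝ) : ℝ :=
  alphaStarES P α X / α

end DQ

/-!
The upper bound `DQ ≤ 1` is subadditivity of `ES`, which follows from the Rockafellar–Uryasev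
formula `ES_α(X) = min_t (t + E[(X - t)⁺] / α)`, attained at `t = VaR_α(X)`: the minimisers of the
summands add up to a competitor for the sum.

Conversely, for events `C ⊆ A` with `0 < P A < α` and `P A ≤ 1 - α`, the vector
`(1_A, -1_{A \ C}, 0, …, 0)` has sum `1_C` and total shortfall `P A / α`, so its quotient is the
conditional probability `P C / P A`. On an atomless space this takes every value in `[0, 1]`.
-/

namespace DQ

section Atomless

variable {Ω : Type*} [MeasurableSpace Ω] {P : Measure Ω} [IsFiniteMeasure P]

lemma exists_superset_forall_superset_add_le {p : Set Ω → Prop} {B : Set Ω} (hB : p B) :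
    ∃ B', p B' ∧ B ⊆ B' ∧ ∀ C, p C → B ⊆ C → P.real C + P.real B ≤ 2 * P.real B' := by
  let S : Set ℝ := P.real '' {C | p C ∧ B ⊆ C}
  have bddAbove_S : BddAbove S :=
    ⟨P.real univ, by rintro _ ⟨C, -, rfl⟩; exact measureReal_mono (subset_univ C)⟩
  have le_sup {C : Set Ω} (hC : p C) (hBC : B ⊆ C) : P.real C ≤ sSup S :=
    le_csSup bddAbove_S ⟨C, ⟨hC, hBC⟩, rfl⟩
  rcases (le_sup hB subset_rfl).eq_or_lt with hmax | hlt
  · exact ⟨B, hB, subset_rfl, fun C hC hBC ↦ by linarith [le_sup hC hBC]⟩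
  · obtain ⟨_, ⟨B', ⟨hB', hBB'⟩, rfl⟩, hmid⟩ :=
      exists_lt_of_lt_csSup (s := S) ⟨_, B, ⟨hB, subset_rfl⟩, rfl⟩
        (show (sSup S + P.real B) / 2 < sSup S by linarith)
    exact ⟨B', hB', hBB', fun C hC hBC ↦ by linarith [le_sup hC hBC]⟩

-- Exhaustion: repeatedly enlarge the set by at least half of the largest possible gain.
lemma exists_forall_superset_measureReal_le {p : Set Ω → Prop} {B₀ : Set Ω} (h₀ : p B₀)
    (h_iUnion : ∀ s : ℕ → Set Ω, Monotone s → (∀ k, p (s k)) → p (⋃ k, s k)) :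
    ∃ B, p B ∧ ∀ C, p C → B ⊆ C → P.real C ≤ P.real B := by
  choose enlarge hp hsub hgain using
    fun B : {B // p B} ↦ exists_superset_forall_superset_add_le (P := P) B.2
  let s : ℕ → {B // p B} := fun k ↦ (fun B ↦ ⟨enlarge B, hp B⟩)^[k] ⟨B₀, h₀⟩
  have s_succ (k : ℕ) : (s (k + 1)).1 = enlarge (s k) := by
    simp only [s, Function.iterate_succ_apply']
  have s_mono : Monotone fun k ↦ (s k).1 :=
    monotone_nat_of_le_succ fun k ↦ (hsub (s k)).trans_eq (s_succ k).symm
  have tendsto_s : Tendsto (fun k ↦ P.real (s k).1) atTop (nhds (P.real (⋃ k, (s k).1))) :=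
    (ENNReal.tendsto_toReal (measure_ne_top _ _)).comp (tendsto_measure_iUnion_atTop s_mono)
  refine ⟨⋃ k, (s k).1, h_iUnion _ s_mono fun k ↦ (s k).2, fun C hC hUC ↦ ?_⟩
  have gain_le (k : ℕ) : P.real C + P.real (s k).1 ≤ 2 * P.real (s (k + 1)).1 :=
    s_succ k ▸ hgain (s k) C hC ((subset_iUnion (fun k ↦ (s k).1) k).trans hUC)
  have := le_of_tendsto_of_tendsto' (tendsto_s.const_add (P.real C))
    ((tendsto_s.comp (tendsto_add_atTop_nat 1)).const_mul 2) gain_le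
  linarith

variable {A : Set Ω}

lemma Atomless.exists_subset_measureReal_le_half (hP : Atomless P) (hA : MeasurableSet A)
    (hA₀ : 0 < P.real A) :
    ∃ B, MeasurableSet B ∧ B ⊆ A ∧ 0 < P.real B ∧ P.real B ≤ P.real A / 2 := by
  obtain ⟨B, hB, hBA, hB₀, hBlt⟩ := hP A hA (ENNReal.toReal_pos_iff.1 hA₀).1
  have pos_B : 0 < P.real B := ENNReal.toReal_pos hB₀.ne' (measure_ne_top _ _)
  have lt_A : P.real B < P.real A :=
    ENNReal.toReal_strict_mono (measure_ne_top _ _) hBlt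
  have diff_eq : P.real (A \ B) = P.real A - P.real B := measureReal_sdiff hBA hB
  rcases le_total (P.real B) (P.real A / 2) with hle | hge
  · exact ⟨B, hB, hBA, pos_B, hle⟩
  · exact ⟨A \ B, hA.diff hB, sdiff_subset, by linarith, by linarith⟩

lemma Atomless.exists_subset_measureReal_le (hP : Atomless P) (hA : MeasurableSet A)
    (hA₀ : 0 < P.real A) {ε : ℝ} (hε : 0 < ε) :
    ∃ B, MeasurableSet B ∧ B ⊆ A ∧ 0 < P.real B ∧ P.real B ≤ ε := by
  by_contra! h
  let S : Set ℝ := P.real '' {B | MeasurableSet B ∧ B ⊆ A ∧ 0 < P.real B}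
  have S_nonempty : S.Nonempty := ⟨_, A, ⟨hA, subset_rfl, hA₀⟩, rfl⟩
  have ε_lower : ε ∈ lowerBounds S := by
    rintro _ ⟨B, ⟨hB, hBA, hB₀⟩, rfl⟩
    exact (h B hB hBA hB₀).le
  have ε_le : ε ≤ sInf S := le_csInf S_nonempty ε_lower
  obtain ⟨_, ⟨B, ⟨hB, hBA, hB₀⟩, rfl⟩, hB_lt⟩ :=
    exists_lt_of_csInf_lt S_nonempty (show sInf S < 2 * sInf S by linarith)
  obtain ⟨D, hD, hDB, hD₀, hD_le⟩ := hP.exists_subset_measureReal_le_half hB hB₀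
  have := csInf_le ⟨ε, ε_lower⟩ ⟨D, ⟨hD, hDB.trans hBA, hD₀⟩, rfl⟩
  linarith

theorem Atomless.exists_subset_measureReal_eq (hP : Atomless P) (hA : MeasurableSet A) {t : ℝ}
    (ht₀ : 0 ≤ t) (ht : t ≤ P.real A) :
    ∃ B, MeasurableSet B ∧ B ⊆ A ∧ P.real B = t := by
  obtain ⟨B, ⟨hB, hBA, hBt⟩, hmax⟩ := exists_forall_superset_measureReal_le (P := P)
    (p := fun B ↦ MeasurableSet B ∧ B ⊆ A ∧ P.real B ≤ t) (B₀ := ∅)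
    ⟨.empty, empty_subset A, by simpa using ht₀⟩ fun s hs hp ↦
      ⟨.iUnion fun k ↦ (hp k).1, iUnion_subset fun k ↦ (hp k).2.1,
        le_of_tendsto' ((ENNReal.tendsto_toReal (measure_ne_top _ _)).comp
          (tendsto_measure_iUnion_atTop hs)) fun k ↦ (hp k).2.2⟩
  refine ⟨B, hB, hBA, hBt.eq_of_not_lt fun hlt ↦ ?_⟩
  have diff_eq : P.real (A \ B) = P.real A - P.real B := measureReal_sdiff hBA hB
  obtain ⟨D, hD, hDA, hD₀, hD_le⟩ :=
    hP.exists_subset_measureReal_le (hA.diff hB) (by linarith) (sub_pos.2 hlt)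
  have union_eq : P.real (B ∪ D) = P.real B + P.real D :=
    measureReal_union (disjoint_left.2 fun _ hxB hxD ↦ (hDA hxD).2 hxB) hD
  have := hmax (B ∪ D)
    ⟨hB.union hD, union_subset hBA (hDA.trans sdiff_subset), by linarith⟩ subset_union_left
  linarith

end Atomless

lemma sInf_le_iff_le_cdf (μ : Measure ℝ) {p : ℝ} (hp : p ∈ Ioo (0 : ℝ) 1) (x : ℝ) :
    sInf {y | p ≤ cdf μ y} ≤ x ↔ p ≤ cdf μ x := by
  have nonempty : {y | p ≤ cdf μ y}.Nonempty :=
    ((tendsto_cdf_atTop μ).eventually_const_le hp.2).exists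
  have bddBelow : BddBelow {y | p ≤ cdf μ y} := by
    obtain ⟨y, hy⟩ := ((tendsto_cdf_atBot μ).eventually_lt_const hp.1).exists
    exact ⟨y, fun z hz ↦ ((monotone_cdf μ).reflect_lt (hy.trans_le hz)).le⟩
  refine ⟨fun h ↦ ?_, csInf_le bddBelow⟩
  have tendsto_right : Tendsto (cdf μ) (nhdsWithin x (Ioi x)) (nhds (cdf μ x)) :=
    ((cdf μ).right_continuous x).mono_left (nhdsWithin_mono x Ioi_subset_Ici_self)
  refine ge_of_tendsto tendsto_right ?_
  filter_upwards [self_mem_nhdsWithin] with y hy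
  obtain ⟨z, hz, hzy⟩ := exists_lt_of_csInf_lt nonempty (h.trans_lt hy)
  exact hz.trans (monotone_cdf μ hzy.le)

section RiskMeasures

variable {Ω : Type*} [MeasurableSpace Ω] {P : Measure Ω} [IsProbabilityMeasure P] {X : Ω → ℝ}
  {α β : ℝ}

lemma cdf_map (hX : AEMeasurable X P) (x : ℝ) : cdf (P.map X) x = P.real {ω | X ω ≤ x} := by
  have := Measure.isProbabilityMeasure_map hX
  rw [cdf_eq_real, map_measureReal_apply_of_aemeasurable hX measurableSet_Iic]
  rfl

lemma VaR_le_iff (hX : AEMeasurable X P) (hβ : β ∈ Ioo (0 : ℝ) 1) (x : ℝ) :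
    VaR P β X ≤ x ↔ 1 - β ≤ P.real {ω | X ω ≤ x} := by
  have := sInf_le_iff_le_cdf (P.map X) (Ioo.one_sub_mem hβ) x
  simpa only [VaR, ← measureReal_def, cdf_map hX] using this

lemma VaR_antitoneOn (hX : AEMeasurable X P) :
    AntitoneOn (fun β ↦ VaR P β X) (Ioo (0 : ℝ) 1) := fun _ hβ _ hγ hβγ ↦
  (VaR_le_iff hX hγ _).2 <| (sub_le_sub_left hβγ 1).trans <| (VaR_le_iff hX hβ _).1 le_rfl

lemma VaR_add_const (hX : AEMeasurable X P) (hβ : β ∈ Ioo (0 : ℝ) 1) (c : ℝ) :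
    VaR P β (fun ω ↦ X ω + c) = VaR P β X + c :=
  eq_of_forall_ge_iff fun x ↦ by
    simp only [VaR_le_iff (hX.add_const c) hβ, ← le_sub_iff_add_le, VaR_le_iff hX hβ]

lemma volume_restrict_VaR_le (hX : AEMeasurable X P) (x : ℝ) :
    volume.restrict (Ioo (0 : ℝ) 1) {β | VaR P β X ≤ x} = P {ω | X ω ≤ x} := by
  have F_le_one : P.real {ω | X ω ≤ x} ≤ 1 := measureReal_le_one
  rw [Measure.restrict_apply' measurableSet_Ioo, ← ofReal_measureReal (μ := P)]
  apply le_antisymm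
  · refine (measure_mono (t := Ico (1 - P.real {ω | X ω ≤ x}) 1) ?_).trans_eq (by simp)
    rintro β ⟨hle, hβ⟩
    exact ⟨by linarith [(VaR_le_iff hX hβ x).1 hle], hβ.2⟩
  · refine Eq.trans_le (by simp) (measure_mono (s := Ioo (1 - P.real {ω | X ω ≤ x}) 1) ?_)
    rintro β ⟨hlt, hβ₁⟩
    have hβ : β ∈ Ioo (0 : ℝ) 1 := ⟨by linarith, hβ₁⟩
    exact ⟨(VaR_le_iff hX hβ x).2 (by linarith), hβ⟩

lemma aemeasurable_VaR (hX : AEMeasurable X P) :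
    AEMeasurable (fun β ↦ VaR P β X) (volume.restrict (Ioo (0 : ℝ) 1)) :=
  aemeasurable_restrict_of_antitoneOn measurableSet_Ioo (VaR_antitoneOn hX)

lemma identDistrib_VaR (hX : AEMeasurable X P) :
    IdentDistrib (fun β ↦ VaR P β X) X (volume.restrict (Ioo (0 : ℝ) 1)) P where
  aemeasurable_fst := aemeasurable_VaR hX
  aemeasurable_snd := hX
  map_eq := Measure.ext_of_Iic _ _ fun x ↦ by
    rw [Measure.map_apply_of_aemeasurable (aemeasurable_VaR hX) measurableSet_Iic,
      Measure.map_apply_of_aemeasurable hX measurableSet_Iic]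
    exact volume_restrict_VaR_le hX x

lemma integrableOn_VaR (hX : Integrable X P) :
    IntegrableOn (fun β ↦ VaR P β X) (Ioo (0 : ℝ) 1) :=
  (identDistrib_VaR hX.aemeasurable).integrable_iff.2 hX

lemma setIntegral_max_VaR_sub (hX : AEMeasurable X P) (t : ℝ) :
    ∫ β in Ioo (0 : ℝ) 1, max (VaR P β X - t) 0 = ∫ ω, max (X ω - t) 0 ∂P :=
  ((identDistrib_VaR hX).comp (u := fun x ↦ max (x - t) 0) (by fun_prop)).integral_eq

lemma ES_eq_add_setIntegral_sub (hX : Integrable X P) (hα : α ∈ Ioc (0 : ℝ) 1) (t : ℝ) :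
    ES P α X = t + 1 / α * ∫ β in Ioo (0 : ℝ) α, (VaR P β X - t) := by
  have hα₀ : α ≠ 0 := hα.1.ne'
  rw [ES, integral_sub ((integrableOn_VaR hX).mono_set (Ioo_subset_Ioo_right hα.2))
    (integrable_const t), setIntegral_const, Real.volume_real_Ioo_of_le hα.1.le, smul_eq_mul]
  field_simp
  ring

lemma ES_le_add_integral_max_sub (hX : Integrable X P) (hα : α ∈ Ioc (0 : ℝ) 1) (t : ℝ) :
    ES P α X ≤ t + 1 / α * ∫ ω, max (X ω - t) 0 ∂P := by
  have hsub : Ioo (0 : ℝ) α ⊆ Ioo 0 1 := Ioo_subset_Ioo_right hα.2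
  have integrableOn_sub : IntegrableOn (fun β ↦ VaR P β X - t) (Ioo (0 : ℝ) 1) :=
    (integrableOn_VaR hX).sub (integrable_const t)
  rw [ES_eq_add_setIntegral_sub hX hα t, ← setIntegral_max_VaR_sub hX.aemeasurable]
  have := one_div_nonneg.2 hα.1.le
  gcongr
  calc ∫ β in Ioo (0 : ℝ) α, (VaR P β X - t)
      ≤ ∫ β in Ioo (0 : ℝ) α, max (VaR P β X - t) 0 :=
        integral_mono (integrableOn_sub.mono_set hsub)
          (IntegrableOn.mono_set integrableOn_sub.pos_part hsub) fun _ ↦ le_max_left _ _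
    _ ≤ ∫ β in Ioo (0 : ℝ) 1, max (VaR P β X - t) 0 :=
        setIntegral_mono_set integrableOn_sub.pos_part (ae_of_all _ fun _ ↦ le_max_right _ _)
          hsub.eventuallyLE

lemma ES_eq_VaR_add_integral_max_sub (hX : Integrable X P) (hα : α ∈ Ioo (0 : ℝ) 1) :
    ES P α X = VaR P α X + 1 / α * ∫ ω, max (X ω - VaR P α X) 0 ∂P := by
  have hsub : Ioo (0 : ℝ) α ⊆ Ioo 0 1 := Ioo_subset_Ioo_right hα.2.le
  have antitone := VaR_antitoneOn hX.aemeasurable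
  rw [ES_eq_add_setIntegral_sub hX (Ioo_subset_Ioc_self hα) (VaR P α X),
    ← setIntegral_max_VaR_sub hX.aemeasurable]
  congr 2
  calc ∫ β in Ioo (0 : ℝ) α, (VaR P β X - VaR P α X)
      = ∫ β in Ioo (0 : ℝ) α, max (VaR P β X - VaR P α X) 0 :=
        setIntegral_congr_fun measurableSet_Ioo fun β hβ ↦
          (max_eq_left (sub_nonneg.2 (antitone (hsub hβ) hα hβ.2.le))).symm
    _ = ∫ β in Ioo (0 : ℝ) 1, max (VaR P β X - VaR P α X) 0 :=
        (setIntegral_eq_of_subset_of_forall_sdiff_eq_zero measurableSet_Ioo hsub fun β hβ ↦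
          max_eq_right (sub_nonpos.2 (antitone hα hβ.1
            (not_lt.1 fun hlt ↦ hβ.2 ⟨hβ.1.1, hlt⟩)))).symm

theorem ES_sum_le {ι : Type*} {X : ι → Ω → ℝ} {s : Finset ι} (hX : ∀ i ∈ s, Integrable (X i) P)
    (hα : α ∈ Ioo (0 : ℝ) 1) :
    ES P α (fun ω ↦ ∑ i ∈ s, X i ω) ≤ ∑ i ∈ s, ES P α (X i) := by
  let t : ι → ℝ := fun i ↦ VaR P α (X i)
  have integrable_sum : Integrable (fun ω ↦ ∑ i ∈ s, X i ω) P := integrable_finsetSum s hX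
  have integrable_max (i : ι) (hi : i ∈ s) : Integrable (fun ω ↦ max (X i ω - t i) 0) P :=
    ((hX i hi).sub (integrable_const _)).pos_part
  have := one_div_nonneg.2 hα.1.le
  calc ES P α (fun ω ↦ ∑ i ∈ s, X i ω)
      ≤ ∑ i ∈ s, t i + 1 / α * ∫ ω, max (∑ i ∈ s, X i ω - ∑ i ∈ s, t i) 0 ∂P :=
        ES_le_add_integral_max_sub integrable_sum (Ioo_subset_Ioc_self hα) _
    _ ≤ ∑ i ∈ s, t i + 1 / α * ∫ ω, ∑ i ∈ s, max (X i ω - t i) 0 ∂P := by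
        gcongr
        · exact (integrable_sum.sub (integrable_const _)).pos_part
        · exact integrable_finsetSum s integrable_max
        · intro ω
          refine max_le ?_ (Finset.sum_nonneg fun i _ ↦ le_max_right _ _)
          rw [← Finset.sum_sub_distrib]
          exact Finset.sum_le_sum fun i _ ↦ le_max_left _ _
    _ = ∑ i ∈ s, (t i + 1 / α * ∫ ω, max (X i ω - t i) 0 ∂P) := by
        rw [integral_finsetSum s integrable_max, Finset.mul_sum, Finset.sum_add_distrib]
    _ = ∑ i ∈ s, ES P α (X i) :=
        Finset.sum_congr rfl fun i hi ↦ (ES_eq_VaR_add_integral_max_sub (hX i hi) hα).symm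

lemma ES_add_const (hX : Integrable X P) (hα : α ∈ Ioc (0 : ℝ) 1) (c : ℝ) :
    ES P α (fun ω ↦ X ω + c) = ES P α X + c := by
  have VaR_sub_eq : ∀ β ∈ Ioo (0 : ℝ) α, VaR P β (fun ω ↦ X ω + c) - c = VaR P β X :=
    fun β hβ ↦ sub_eq_of_eq_add (VaR_add_const hX.aemeasurable ⟨hβ.1, hβ.2.trans_le hα.2⟩ c)
  have integrable_add : Integrable (fun ω ↦ X ω + c) P := hX.add (integrable_const c)
  rw [ES_eq_add_setIntegral_sub integrable_add hα c,
    setIntegral_congr_fun measurableSet_Ioo VaR_sub_eq, ← ES, add_comm]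

section Indicator

variable {A : Set Ω}

lemma integrable_indicator_one (hA : MeasurableSet A) : Integrable (A.indicator (1 : Ω → ℝ)) P :=
  (integrable_const 1).indicator hA

lemma measureReal_indicator_one_le (hA : MeasurableSet A) (x : ℝ) :
    P.real {ω | A.indicator 1 ω ≤ x} = if x < 0 then 0 else if x < 1 then 1 - P.real A else 1 := by
  split_ifs with h₀ h₁
  · rw [show {ω | A.indicator 1 ω ≤ x} = ∅ from eq_empty_of_forall_notMem fun ω hω ↦
      (h₀.trans_le (indicator_nonneg (fun _ _ ↦ zero_le_one) ω)).not_ge hω, measureReal_empty]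
  · rw [← probReal_compl_eq_one_sub hA]
    congr with ω
    by_cases hω : ω ∈ A <;> simp [hω, h₁, not_lt.1 h₀]
  · rw [show {ω | A.indicator 1 ω ≤ x} = univ from eq_univ_of_forall fun ω ↦
      (indicator_le_self' (fun _ _ ↦ zero_le_one) ω).trans (not_lt.1 h₁), probReal_univ]

lemma VaR_indicator_one (hA : MeasurableSet A) (hβ : β ∈ Ioo (0 : ℝ) 1) :
    VaR P β (A.indicator 1) = (Iio (P.real A)).indicator 1 β := by
  have hm : Measurable (A.indicator (1 : Ω → ℝ)) := measurable_one.indicator hA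
  refine eq_of_forall_ge_iff fun x ↦ ?_
  rw [VaR_le_iff hm.aemeasurable hβ, measureReal_indicator_one_le hA]
  obtain ⟨hβ₀, hβ₁⟩ := hβ
  simp only [indicator, mem_Iio, Pi.one_apply]
  grind

lemma ES_indicator_one (hA : MeasurableSet A) (hα : α ∈ Ioc (0 : ℝ) 1) :
    ES P α (A.indicator 1) = min α (P.real A) / α := by
  have VaR_eq : ∀ β ∈ Ioo (0 : ℝ) α,
      VaR P β (A.indicator 1) = (Iio (P.real A)).indicator 1 β :=
    fun β hβ ↦ VaR_indicator_one hA ⟨hβ.1, hβ.2.trans_le hα.2⟩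
  rw [ES, setIntegral_congr_fun measurableSet_Ioo VaR_eq, setIntegral_indicator measurableSet_Iio,
    Ioo_inter_Iio]
  have : 0 ≤ min α (P.real A) := le_min hα.1.le measureReal_nonneg
  simp [this, div_eq_inv_mul]

lemma ES_zero (hα : α ∈ Ioc (0 : ℝ) 1) : ES P α 0 = 0 := by
  rw [← indicator_empty' 1, ES_indicator_one .empty hα, measureReal_empty, min_eq_right hα.1.le,
    zero_div]

lemma ES_neg_indicator_one (hA : MeasurableSet A) (hα : α ∈ Ioc (0 : ℝ) 1) :
    ES P α (-A.indicator 1) = min α (1 - P.real A) / α - 1 := by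
  have neg_eq : -A.indicator (1 : Ω → ℝ) = fun ω ↦ Aᶜ.indicator 1 ω + -1 := by
    ext ω
    simp only [Pi.neg_apply, indicator_compl, Pi.sub_apply, Pi.one_apply]
    ring
  rw [neg_eq, ES_add_const (integrable_indicator_one hA.compl) hα,
    ES_indicator_one hA.compl hα, probReal_compl_eq_one_sub hA, ← sub_eq_add_neg]

end Indicator

end RiskMeasures

section AlphaStar

variable {Ω : Type*} [MeasurableSpace Ω] {P : Measure Ω} {n : ℕ} {X : Fin n → Ω → ℝ} {α b : ℝ}

lemma le_alphaStarES (hb : b ≤ 1)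
    (h : ∀ β ∈ Ioo (0 : ℝ) 1, ES P β (fun ω ↦ ∑ i, X i ω) ≤ ∑ i, ES P α (X i) → b ≤ β) :
    b ≤ alphaStarES P α X := by
  refine le_csInf ⟨1, .inr rfl⟩ ?_
  rintro β (⟨hβ, hES⟩ | rfl)
  exacts [h β hβ hES, hb]

lemma alphaStarES_nonneg : 0 ≤ alphaStarES P α X :=
  le_alphaStarES zero_le_one fun _ hβ _ ↦ hβ.1.le

lemma bddBelow_alphaStarES : BddBelow ({β ∈ Ioo (0 : ℝ) 1 |
    ES P β (fun ω ↦ ∑ i, X i ω) ≤ ∑ i, ES P α (X i)} ∪ {1}) :=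
  (bddBelow_Ioo.mono (sep_subset _ _)).union bddBelow_singleton

lemma alphaStarES_le_one : alphaStarES P α X ≤ 1 :=
  csInf_le bddBelow_alphaStarES (.inr rfl)

lemma alphaStarES_le {β : ℝ} (hβ : β ∈ Ioo (0 : ℝ) 1)
    (hES : ES P β (fun ω ↦ ∑ i, X i ω) ≤ ∑ i, ES P α (X i)) : alphaStarES P α X ≤ β :=
  csInf_le bddBelow_alphaStarES (.inl ⟨hβ, hES⟩)

lemma alphaStarES_eq_of_forall_le_iff (hb : b ∈ Icc (0 : ℝ) 1)
    (h : ∀ β ∈ Ioo (0 : ℝ) 1,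
      ES P β (fun ω ↦ ∑ i, X i ω) ≤ ∑ i, ES P α (X i) ↔ b ≤ β) :
    alphaStarES P α X = b := by
  refine le_antisymm (le_of_forall_gt_imp_ge_of_dense fun β hbβ ↦ ?_)
    (le_alphaStarES hb.2 fun β hβ ↦ (h β hβ).1)
  rcases lt_or_ge β 1 with hβ | hβ
  · have hβ' : β ∈ Ioo (0 : ℝ) 1 := ⟨hb.1.trans_lt hbβ, hβ⟩
    exact alphaStarES_le hβ' ((h β hβ').2 hbβ.le)
  · exact alphaStarES_le_one.trans hβ

theorem DQES_mem_Icc [IsProbabilityMeasure P] (hX : ∀ i, Integrable (X i) P)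
    (hα : α ∈ Ioo (0 : ℝ) 1) : DQES P α X ∈ Icc (0 : ℝ) 1 :=
  ⟨div_nonneg alphaStarES_nonneg hα.1.le,
    div_le_one_of_le₀ (alphaStarES_le hα (ES_sum_le (fun i _ ↦ hX i) hα)) hα.1.le⟩

end AlphaStar

/-- The vector `(f, g, 0, …, 0)`: two risks padded with zeros to length `m + 2`. -/
def padPair {Ω : Type*} (f g : Ω → ℝ) (m : ℕ) : Fin (m + 2) → Ω → ℝ :=
  Fin.cons f (Fin.cons g 0)

section PadPair

variable {Ω : Type*} {f g : Ω → ℝ} {A C : Set Ω} {m : ℕ}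

lemma forall_padPair {p : (Ω → ℝ) → Prop} (hf : p f) (hg : p g) (h₀ : p 0) (i : Fin (m + 2)) :
    p (padPair f g m i) :=
  Fin.cases hf (Fin.cases hg fun _ ↦ h₀) i

lemma sum_padPair : (fun ω ↦ ∑ i, padPair f g m i ω) = f + g := by
  ext ω
  simp [padPair, Fin.sum_univ_succ]

lemma sum_padPair_indicator (hCA : C ⊆ A) :
    (fun ω ↦ ∑ i, padPair (A.indicator 1) (-(A \ C).indicator 1) m i ω) = C.indicator 1 := by
  rw [sum_padPair, indicator_sdiff hCA]
  abel

variable [MeasurableSpace Ω] {P : Measure Ω} [IsProbabilityMeasure P] {α : ℝ}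

lemma sum_ES_padPair (hα : α ∈ Ioc (0 : ℝ) 1) :
    ∑ i, ES P α (padPair f g m i) = ES P α f + ES P α g := by
  simp [padPair, Fin.sum_univ_succ, ES_zero hα]

lemma sum_ES_padPair_indicator (hα : α ∈ Ioc (0 : ℝ) 1) (hA : MeasurableSet A)
    (hC : MeasurableSet C) (hAα : P.real A ≤ α) (hA' : P.real A ≤ 1 - α) :
    ∑ i, ES P α (padPair (A.indicator 1) (-(A \ C).indicator 1) m i) = P.real A / α := by
  have diff_le : P.real (A \ C) ≤ 1 - α := (measureReal_mono sdiff_subset).trans hA'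
  rw [sum_ES_padPair hα, ES_indicator_one hA hα, ES_neg_indicator_one (hA.diff hC) hα,
    min_eq_right hAα, min_eq_left (by linarith), div_self hα.1.ne', sub_self, add_zero]

theorem DQES_padPair_indicator (hα : α ∈ Ioo (0 : ℝ) 1) (hA : MeasurableSet A)
    (hC : MeasurableSet C) (hCA : C ⊆ A) (hA₀ : 0 < P.real A) (hAα : P.real A < α)
    (hA' : P.real A ≤ 1 - α) :
    DQES P α (padPair (A.indicator 1) (-(A \ C).indicator 1) m) = P.real C / P.real A := by
  have ratio_le_one : P.real C / P.real A ≤ 1 := div_le_one_of_le₀ (measureReal_mono hCA) hA₀.le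
  have ratio_mem : P.real C / P.real A * α ∈ Icc (0 : ℝ) 1 :=
    ⟨mul_nonneg (by positivity) hα.1.le, mul_le_one₀ ratio_le_one hα.1.le hα.2.le⟩
  rw [DQES, div_eq_iff hα.1.ne']
  refine alphaStarES_eq_of_forall_le_iff ratio_mem fun β hβ ↦ ?_
  have not_self_le : ¬ β ≤ P.real A / α * β :=
    not_le.2 (mul_lt_of_lt_one_left hβ.1 ((div_lt_one hα.1).2 hAα))
  rw [sum_padPair_indicator hCA,
    sum_ES_padPair_indicator (Ioo_subset_Ioc_self hα) hA hC hAα.le hA',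
    ES_indicator_one hC (Ioo_subset_Ioc_self hβ), div_le_iff₀ hβ.1, min_le_iff,
    or_iff_right not_self_le, div_mul_eq_mul_div, div_mul_eq_mul_div, le_div_iff₀ hα.1,
    div_le_iff₀ hA₀, mul_comm β]

end PadPair

theorem exists_DQES_eq {Ω : Type*} [MeasurableSpace Ω] {P : Measure Ω} [IsProbabilityMeasure P]
    (hP : Atomless P) {n : ℕ} (hn : 2 ≤ n) {α d : ℝ} (hα : α ∈ Ioo (0 : ℝ) 1)
    (hd : d ∈ Icc (0 : ℝ) 1) :
    ∃ X : Fin n → Ω → ℝ,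
      (∀ i, Measurable (X i)) ∧ (∀ i, Integrable (X i) P) ∧ DQES P α X = d := by
  obtain ⟨m, rfl⟩ := Nat.exists_eq_add_of_le' hn
  have level_pos : 0 < α * (1 - α) := mul_pos hα.1 (sub_pos.2 hα.2)
  have level_lt : α * (1 - α) < α := mul_lt_of_lt_one_right hα.1 (sub_lt_self 1 hα.1)
  have level_le : α * (1 - α) ≤ 1 - α := mul_le_of_le_one_left (sub_nonneg.2 hα.2.le) hα.2.le
  obtain ⟨A, hA, -, hPA⟩ := hP.exists_subset_measureReal_eq .univ level_pos.le
    (probReal_univ (μ := P) ▸ level_lt.le.trans hα.2.le)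
  rw [← hPA] at level_pos level_lt level_le
  obtain ⟨C, hC, hCA, hPC⟩ := hP.exists_subset_measureReal_eq hA
    (mul_nonneg hd.1 level_pos.le) (mul_le_of_le_one_left level_pos.le hd.2)
  refine ⟨padPair (A.indicator 1) (-(A \ C).indicator 1) m,
    forall_padPair (measurable_one.indicator hA) (measurable_one.indicator (hA.diff hC)).neg
      measurable_zero,
    forall_padPair (p := (Integrable · P)) (integrable_indicator_one hA)
      (integrable_indicator_one (hA.diff hC)).neg (integrable_zero _ _ _), ?_⟩
  rw [DQES_padPair_indicator hα hA hC hCA level_pos level_lt level_le, hPC,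
    mul_div_cancel_right₀ d level_pos.ne']

end DQ

open DQ in
/-- For every n ≥ 2 and α ∈ (0,1), the set of values attained by DQ^ES_α over all
random vectors of n integrable real random variables is exactly [0, 1]. -/
theorem stmt2 {Ω : Type*} [MeasurableSpace Ω] (P : Measure Ω) [IsProbabilityMeasure P]
    (hP : Atomless P) (n : ℕ) (hn : 2 ≤ n) (α : ℝ) (hα : α ∈ Set.Ioo (0 : ℝ) 1) :
    {d : ℝ | ∃ X : Fin n → Ω → ℝ,
        (∀ i, Measurable (X i)) ∧ (∀ i, Integrable (X i) P) ∧ DQES P α X = d}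
      = Set.Icc (0 : ℝ) 1 := by
  ext d
  constructor
  · rintro ⟨X, -, hX, rfl⟩
    exact DQES_mem_Icc hX hα
  · exact exists_DQES_eq hP hn hα
end

section
/- For every random vector X = (X_1,…,X_n) and every α ∈ (0,1), DQ^VaR_α(X) = 0 if and only if X_1 + ⋯ + X_n ≤ Σ_{i=1}^n VaR_α(X_i) almost surely. -/
open MeasureTheory ProbabilityTheory Filter Set

/-!
The heart of the matter is the identity `α* = P(∑ Xᵢ > ∑ VaR_α(Xᵢ))`. Right-continuity of the
distribution function of a random variable `S` gives `VaR_β(S) ≤ t ↔ P(S > t) ≤ β` for every level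
`β ∈ (0, 1)`, so `α*` is the infimum of the levels `β` above the exceedance probability.
-/

namespace DQ

theorem le_stieltjesFunction_csInf {R : Type*} [ConditionallyCompleteLinearOrder R]
    [TopologicalSpace R] [OrderTopology R] (F : StieltjesFunction R) {p : ℝ}
    (hne : {x | p ≤ F x}.Nonempty) (hbdd : BddBelow {x | p ≤ F x}) :
    p ≤ F (sInf {x | p ≤ F x}) :=
  ge_of_tendsto_of_frequently (F.right_continuous _) ((isGLB_csInf hne hbdd).frequently_mem hne)

theorem nonempty_setOf_le_cdf (μ : Measure ℝ) {p : ℝ} (hp : p < 1) :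
    {x | p ≤ cdf μ x}.Nonempty :=
  ((tendsto_cdf_atTop μ).eventually_const_le hp).exists

theorem bddBelow_setOf_le_cdf (μ : Measure ℝ) {p : ℝ} (hp : 0 < p) :
    BddBelow {x | p ≤ cdf μ x} := by
  obtain ⟨b, hb⟩ := ((tendsto_cdf_atBot μ).eventually_lt_const hp).exists
  exact ⟨b, fun x hx ↦ ((monotone_cdf μ).reflect_lt (hb.trans_le hx)).le⟩

theorem csInf_setOf_le_cdf_le_iff (μ : Measure ℝ) {p : ℝ} (hp : p ∈ Ioo (0 : ℝ) 1) (t : ℝ) :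
    sInf {x | p ≤ cdf μ x} ≤ t ↔ p ≤ cdf μ t := by
  have hne := nonempty_setOf_le_cdf μ hp.2
  have hbdd := bddBelow_setOf_le_cdf μ hp.1
  exact ⟨fun h ↦ (le_stieltjesFunction_csInf (cdf μ) hne hbdd).trans (monotone_cdf μ h),
    fun h ↦ csInf_le hbdd h⟩

theorem csInf_setOf_mem_Ioo_le_union_one {p : ℝ} (hp : p ∈ Icc (0 : ℝ) 1) :
    sInf ({β ∈ Ioo (0 : ℝ) 1 | p ≤ β} ∪ {1}) = p := by
  have hlb : p ∈ lowerBounds ({β ∈ Ioo (0 : ℝ) 1 | p ≤ β} ∪ {1}) := by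
    rintro β (hβ | rfl)
    exacts [hβ.2, hp.2]
  refine le_antisymm ?_ (le_csInf ⟨1, Or.inr rfl⟩ hlb)
  rcases hp.2.eq_or_lt with rfl | hp1
  · exact csInf_le ⟨1, hlb⟩ (Or.inr rfl)
  · have hsub : Ioo p 1 ⊆ {β ∈ Ioo (0 : ℝ) 1 | p ≤ β} ∪ {1} :=
      fun β hβ ↦ Or.inl ⟨⟨hp.1.trans_lt hβ.1, hβ.2⟩, hβ.1.le⟩
    calc sInf ({β ∈ Ioo (0 : ℝ) 1 | p ≤ β} ∪ {1})
        ≤ sInf (Ioo p 1) := csInf_le_csInf ⟨p, hlb⟩ (nonempty_Ioo.2 hp1) hsub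
      _ = p := csInf_Ioo hp1

section Probability

variable {Ω : Type*} [MeasurableSpace Ω] {P : Measure Ω} [IsProbabilityMeasure P]

theorem VaR_eq_csInf_cdf {S : Ω → ℝ} (hS : AEMeasurable S P) (β : ℝ) :
    VaR P β S = sInf {x | 1 - β ≤ cdf (P.map S) x} := by
  have := Measure.isProbabilityMeasure_map hS
  simp only [cdf_eq_real, map_measureReal_apply_of_aemeasurable hS measurableSet_Iic]
  rfl

theorem cdf_map_eq_one_sub_measureReal {S : Ω → ℝ} (hS : AEMeasurable S P) (t : ℝ) :
    cdf (P.map S) t = 1 - P.real {ω | t < S ω} := by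
  have := Measure.isProbabilityMeasure_map hS
  rw [cdf_eq_real, ← compl_Ioi, probReal_compl_eq_one_sub measurableSet_Ioi,
    map_measureReal_apply_of_aemeasurable hS measurableSet_Ioi]
  rfl

theorem VaR_le_iff_measureReal_le {S : Ω → ℝ} (hS : AEMeasurable S P) {β : ℝ}
    (hβ : β ∈ Ioo (0 : ℝ) 1) (t : ℝ) : VaR P β S ≤ t ↔ P.real {ω | t < S ω} ≤ β := by
  have hβ' : 1 - β ∈ Ioo (0 : ℝ) 1 := ⟨sub_pos.2 hβ.2, sub_lt_self 1 hβ.1⟩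
  rw [VaR_eq_csInf_cdf hS, csInf_setOf_le_cdf_le_iff _ hβ',
    cdf_map_eq_one_sub_measureReal hS, sub_le_sub_iff_left]

theorem alphaStarVaR_eq_measureReal {n : ℕ} {X : Fin n → Ω → ℝ} (hX : ∀ i, AEMeasurable (X i) P)
    (α : ℝ) : alphaStarVaR P α X = P.real {ω | ∑ i, VaR P α (X i) < ∑ i, X i ω} := by
  have hS : AEMeasurable (fun ω ↦ ∑ i, X i ω) P := by fun_prop
  have hlevels : {β ∈ Ioo (0 : ℝ) 1 | VaR P β (fun ω ↦ ∑ i, X i ω) ≤ ∑ i, VaR P α (X i)} =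
      {β ∈ Ioo (0 : ℝ) 1 | P.real {ω | ∑ i, VaR P α (X i) < ∑ i, X i ω} ≤ β} :=
    Set.ext fun β ↦ and_congr_right fun hβ ↦ VaR_le_iff_measureReal_le hS hβ _
  rw [alphaStarVaR, hlevels]
  exact csInf_setOf_mem_Ioo_le_union_one ⟨measureReal_nonneg, measureReal_le_one⟩

end Probability

end DQ

open DQ in
theorem stmt3_general {Ω : Type*} [MeasurableSpace Ω] (P : Measure Ω) [IsProbabilityMeasure P]
    {n : ℕ} {X : Fin n → Ω → ℝ} (hX : ∀ i, AEMeasurable (X i) P)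
    {α : ℝ} (hα : α ∈ Set.Ioo (0 : ℝ) 1) :
    DQVaR P α X = 0 ↔ ∀ᵐ ω ∂P, (∑ i, X i ω) ≤ ∑ i, VaR P α (X i) :=
  calc DQVaR P α X = 0
      ↔ alphaStarVaR P α X = 0 := div_eq_zero_iff.trans (or_iff_left hα.1.ne')
    _ ↔ P {ω | ∑ i, VaR P α (X i) < ∑ i, X i ω} = 0 := by
      rw [alphaStarVaR_eq_measureReal hX, measureReal_eq_zero_iff]
    _ ↔ ∀ᵐ ω ∂P, (∑ i, X i ω) ≤ ∑ i, VaR P α (X i) := by simp only [ae_iff, not_le]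

open DQ in
/-- DQ^VaR_α(X) = 0 if and only if X₁ + ⋯ + Xₙ ≤ ∑ᵢ VaR_α(Xᵢ) almost surely. -/
theorem stmt3 {Ω : Type*} [MeasurableSpace Ω] (P : Measure Ω) [IsProbabilityMeasure P]
    (hP : Atomless P) (n : ℕ) (X : Fin n → Ω → ℝ) (hX : ∀ i, Measurable (X i))
    (α : ℝ) (hα : α ∈ Set.Ioo (0 : ℝ) 1) :
    DQVaR P α X = 0 ↔ ∀ᵐ ω ∂P, (∑ i, X i ω) ≤ ∑ i, VaR P α (X i) :=
  stmt3_general P (fun i ↦ (hX i).aemeasurable) hα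
end
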